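/- Let Λ be a finite set and suppose the nonlinear term φ is symmetric, i.e. φ(K) = φ(Λ) − φ(Λ \ K) for every subset K ⊆ Λ. Then for every subset K ⊆ Λ, the equality u₀ + (∑_{j∈Λ} u₁(j))/2 + φ(Λ)/2 = 0 holds if and only if Φ(K) + Φ(Λ \ K) = 1. (Lemma 3.) -/

import Mathlib

open Finset Real

theorem exp_div_one_add_exp_eq_sigmoid (x : ℝ) : exp x / (1 + exp x) = sigmoid x := by
  rw [sigmoid_def, exp_neg]
  field

theorem sigmoid_add_sigmoid_eq_one_iff {x y : ℝ} : sigmoid x + sigmoid y = 1 ↔ x + y = 0 := by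
  rw [← eq_sub_iff_add_eq, ← sigmoid_neg, sigmoid_inj, eq_neg_iff_add_eq_zero]

/-- Lemma 3: assuming the nonlinear term `φ` is symmetric, for every `K ⊆ Λ`
one has `u₀ + (∑_{j∈Λ} u₁ j)/2 + φ Λ / 2 = 0` iff `Φ K + Φ (Λ \ K) = 1`. -/
theorem potential_eq_zero_iff_prob_sum_one
    {ι : Type*} [DecidableEq ι] (Λ : Finset ι) (u₀ : ℝ) (u₁ : ι → ℝ)
    (φ : Finset ι → ℝ) (Φ : Finset ι → ℝ)
    (hΦ : ∀ K ⊆ Λ, Φ K =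
      Real.exp (u₀ + ∑ j ∈ K, u₁ j + φ K) /
        (1 + Real.exp (u₀ + ∑ j ∈ K, u₁ j + φ K)))
    (hsym : ∀ K ⊆ Λ, φ K = φ Λ - φ (Λ \ K)) :
    ∀ K ⊆ Λ,
      (u₀ + (∑ j ∈ Λ, u₁ j) / 2 + φ Λ / 2 = 0 ↔ Φ K + Φ (Λ \ K) = 1) := by
  intro K hK
  have exponent_add_exponent_sdiff :
      (u₀ + ∑ j ∈ K, u₁ j + φ K) + (u₀ + ∑ j ∈ Λ \ K, u₁ j + φ (Λ \ K)) =
        2 * (u₀ + (∑ j ∈ Λ, u₁ j) / 2 + φ Λ / 2) := by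
    rw [← sum_sdiff hK, hsym K hK]
    ring
  rw [hΦ K hK, hΦ (Λ \ K) sdiff_subset, exp_div_one_add_exp_eq_sigmoid,
    exp_div_one_add_exp_eq_sigmoid, sigmoid_add_sigmoid_eq_one_iff, exponent_add_exponent_sdiff,
    mul_eq_zero_iff_left two_ne_zero]
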